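/- arXiv:2407.09815 — 3 statements merged into one kernel-verified Lean document; each statement's English description precedes it below -/
import Mathlib

section
/- For every 1 < p ≤ ∞, every f ∈ ℓ^{p,1}(ℤ^d) and every j = 1,…,d, one has ‖∂_j f‖_{ℓ^{p,1}(ℤ^d)} ≤ C_p ‖f‖_{ℓ^{p,1}(ℤ^d)} for a constant C_p depending only on p and d. -/
/-!
Write `G m = ‖f m‖ ⟨m⟩` and `u b = (1 + b²)^{-1/2}` for `b ∈ ℤ`. The kernel `φⱼ` lives on the line
`ℤ eⱼ` and satisfies `|φⱼ(b eⱼ)| ≤ 4 u(b)²`. If `m` arises from `k` by replacing the coordinate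
`kⱼ` by `a`, and `b = kⱼ - a`, then `⟨k⟩ ≤ ⟨m⟩ + |b|` and `⟨m⟩ ≥ u(a)⁻¹`, so
`⟨k⟩ |∂ⱼ f(k)| ≤ ∑ₐ 4 (u(b)² + u(a) u(b)) G(m)` (`enorm_pd_mul_jap_le`).

It remains to bound the positive one-dimensional operator with kernel `u(k-a)² + u(a) u(k-a)`
on `ℓ^p(ℤ)`. The first part is a convolution with the summable sequence `u²`. In the second part
`u G` is summable by Hölder's inequality, since `u ∈ ℓ^{p'}`, and it is convolved with `u ∈ ℓ^p`;
the memberships use `p < ∞` and `1 < p` respectively (`tsum_line_rpow_le`). For `p = ∞` the row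
sums of the kernel are at most `3 ∑ u²`. Finally the `ℓ^p(ℤ^d)` norm is the `ℓ^p` sum of the
norms over the lines parallel to `eⱼ`, so the one-dimensional bound applies line by line.
-/

open scoped BigOperators ENNReal NNReal
open MeasureTheory Filter

noncomputable section

/-- Kernel `φⱼ` of the discrete partial derivative on `ℤ^d`:
`φⱼ(m) = -4i/(π(4a²-1))` if `m = a·eⱼ`, and `0` otherwise. -/
def phi (d : ℕ) (j : Fin d) (m : Fin d → ℤ) : ℂ :=
  if ∀ i, i ≠ j → m i = 0 then
    (-4 * Complex.I) / ((Real.pi : ℂ) * (4 * (m j : ℂ) ^ 2 - 1))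
  else 0

/-- Discrete convolution on `ℤ^d`. -/
def dconv {d : ℕ} (u v : (Fin d → ℤ) → ℂ) (k : Fin d → ℤ) : ℂ :=
  ∑' m, u m * v (k - m)

/-- Discrete partial derivative `∂ⱼ u = u ∗ φⱼ`. -/
def pd {d : ℕ} (j : Fin d) (u : (Fin d → ℤ) → ℂ) : (Fin d → ℤ) → ℂ :=
  dconv u (phi d j)

/-- Japanese bracket `⟨m⟩ = (1+|m|²)^{1/2}`. -/
def jap {d : ℕ} (m : Fin d → ℤ) : ℝ :=
  Real.sqrt (1 + ∑ i, ((m i : ℝ)) ^ 2)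

open scoped Classical in
/-- `ℓ^p` norm on `ℤ^d` (valued in `ℝ≥0∞`), `1 ≤ p ≤ ∞`. -/
def lpn {d : ℕ} (p : ℝ≥0∞) (f : (Fin d → ℤ) → ℂ) : ℝ≥0∞ :=
  if p = ⊤ then ⨆ m, (‖f m‖₊ : ℝ≥0∞)
  else (∑' m, (‖f m‖₊ : ℝ≥0∞) ^ p.toReal) ^ (1 / p.toReal)

/-- Weighted `ℓ^{p,1}` norm: the `ℓ^p` norm of `m ↦ f(m)⟨m⟩`. -/
def wlp {d : ℕ} (p : ℝ≥0∞) (f : (Fin d → ℤ) → ℂ) : ℝ≥0∞ :=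
  lpn p (fun m => f m * (jap m : ℂ))

/-- The one-dimensional weight `u b = (1 + b²)^{-1/2}`, with values in `ℝ≥0∞`. -/
def invJap (b : ℤ) : ℝ≥0∞ := ENNReal.ofReal (Real.sqrt (1 + (b : ℝ) ^ 2))⁻¹

lemma tsum_invJap_rpow_ne_top {q : ℝ} (hq : 1 < q) : ∑' b, invJap b ^ q ≠ ⊤ := by
  have hs : Summable fun b : ℤ => (Real.sqrt (1 + (b : ℝ) ^ 2))⁻¹ ^ q := by
    refine Summable.of_norm_bounded_eventually (Real.summable_abs_int_rpow hq) ?_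
    rw [Filter.eventually_cofinite]
    refine (Set.finite_singleton (0 : ℤ)).subset fun b hb => ?_
    by_contra hb0
    apply hb
    have hpos : 0 < |(b : ℝ)| := abs_pos.mpr (by exact_mod_cast hb0)
    rw [Real.norm_of_nonneg (by positivity), Real.rpow_neg hpos.le, ← Real.inv_rpow hpos.le]
    gcongr
    exact Real.abs_le_sqrt (by linarith)
  have : ∀ b : ℤ, invJap b ^ q = ENNReal.ofReal ((Real.sqrt (1 + (b : ℝ) ^ 2))⁻¹ ^ q) := fun b =>
    ENNReal.ofReal_rpow_of_nonneg (by positivity) (by linarith)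
  simp_rw [this]
  exact hs.tsum_ofReal_ne_top

lemma tsum_invJap_sq_ne_top : ∑' b, invJap b ^ 2 ≠ ⊤ := by
  simpa using tsum_invJap_rpow_ne_top (q := 2) (by norm_num)

/-- Jensen's inequality for the (not normalised) weights `w`. -/
lemma tsum_mul_rpow_le {ι : Type*} {r : ℝ} (hr : 1 < r) (w v : ι → ℝ≥0∞) :
    (∑' i, w i * v i) ^ r ≤ (∑' i, w i) ^ (r - 1) * ∑' i, w i * v i ^ r := by
  have h0 : 0 < r := by linarith
  have h : ∑' i, w i * v i ≤ (∑' i, w i) ^ (1 - r⁻¹) * (∑' i, w i * v i ^ r) ^ r⁻¹ := by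
    rw [ENNReal.tsum_eq_iSup_sum]
    refine iSup_le fun s => (ENNReal.inner_le_weight_mul_Lp_of_nonneg s hr.le w v).trans ?_
    have : 0 ≤ 1 - r⁻¹ := by
      have := inv_le_one_of_one_le₀ hr.le
      linarith
    gcongr <;> exact ENNReal.sum_le_tsum s
  calc (∑' i, w i * v i) ^ r
      ≤ ((∑' i, w i) ^ (1 - r⁻¹) * (∑' i, w i * v i ^ r) ^ r⁻¹) ^ r := by gcongr
    _ = _ := by
      rw [ENNReal.mul_rpow_of_nonneg _ _ h0.le, ← ENNReal.rpow_mul, ← ENNReal.rpow_mul,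
        inv_mul_cancel₀ h0.ne', ENNReal.rpow_one]
      congr 2
      field_simp

lemma tsum_mul_rpow_le_holder {ι : Type*} {r q : ℝ} (h : r.HolderConjugate q)
    (w v : ι → ℝ≥0∞) :
    (∑' i, w i * v i) ^ r ≤ (∑' i, w i ^ q) ^ (r / q) * ∑' i, v i ^ r := by
  have h0 : 0 < r := h.pos
  have hq0 : 0 < q := h.symm.pos
  have h : ∑' i, w i * v i ≤ (∑' i, w i ^ q) ^ (1 / q) * (∑' i, v i ^ r) ^ (1 / r) := by
    rw [ENNReal.tsum_eq_iSup_sum]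
    refine iSup_le fun s => (ENNReal.inner_le_Lp_mul_Lq s w v h.symm).trans ?_
    gcongr <;> exact ENNReal.sum_le_tsum s
  calc (∑' i, w i * v i) ^ r
      ≤ ((∑' i, w i ^ q) ^ (1 / q) * (∑' i, v i ^ r) ^ (1 / r)) ^ r := by gcongr
    _ = _ := by
      rw [ENNReal.mul_rpow_of_nonneg _ _ h0.le, ← ENNReal.rpow_mul, ← ENNReal.rpow_mul,
        one_div_mul_cancel h0.ne', ENNReal.rpow_one]
      congr 2
      field_simp

lemma tsum_sub_left (F : ℤ → ℝ≥0∞) (k : ℤ) : ∑' a, F (k - a) = ∑' b, F b :=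
  (Equiv.subLeft k).tsum_eq F

lemma tsum_sub_right (F : ℤ → ℝ≥0∞) (a : ℤ) : ∑' k, F (k - a) = ∑' b, F b :=
  (Equiv.subRight a).tsum_eq F

/-- The one-dimensional operator, with kernel `4 (u(k-a)² + u(a) u(k-a))`. -/
def lineOp (G : ℤ → ℝ≥0∞) (k : ℤ) : ℝ≥0∞ :=
  ∑' a, 4 * (invJap (k - a) ^ 2 + invJap a * invJap (k - a)) * G a

lemma lineOp_eq (G : ℤ → ℝ≥0∞) (k : ℤ) :
    lineOp G k = 4 * (∑' a, invJap (k - a) ^ 2 * G a +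
      ∑' a, (invJap a * G a) * invJap (k - a)) := by
  rw [← ENNReal.tsum_add, ← ENNReal.tsum_mul_left, lineOp]
  congr 1 with a
  ring

/-- Young's inequality `‖w ∗ v‖_r ≤ ‖w‖_1 ‖v‖_r`, raised to the power `r`. -/
lemma tsum_tsum_mul_rpow_le {r : ℝ} (hr : 1 < r) (w v : ℤ → ℝ≥0∞) :
    ∑' k, (∑' a, w a * v (k - a)) ^ r ≤ (∑' a, w a) ^ r * ∑' b, v b ^ r := by
  calc ∑' k, (∑' a, w a * v (k - a)) ^ r
      ≤ ∑' k, (∑' a, w a) ^ (r - 1) * ∑' a, w a * v (k - a) ^ r :=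
        ENNReal.tsum_le_tsum fun k => tsum_mul_rpow_le hr w fun a => v (k - a)
    _ = (∑' a, w a) ^ (r - 1) * ((∑' a, w a) * ∑' b, v b ^ r) := by
        rw [ENNReal.tsum_mul_left, ENNReal.tsum_comm, ← ENNReal.tsum_mul_right]
        congr 2 with a
        rw [ENNReal.tsum_mul_left, tsum_sub_right (fun b => v b ^ r)]
    _ = _ := by
        rw [← mul_assoc]
        congr 1
        conv_rhs => rw [show r = (r - 1) + 1 by ring,
          ENNReal.rpow_add_of_nonneg _ _ (by linarith) zero_le_one, ENNReal.rpow_one]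

lemma tsum_line_rpow_le {r : ℝ} (hr : 1 < r) :
    ∃ C : ℝ≥0∞, C ≠ ⊤ ∧ ∀ G : ℤ → ℝ≥0∞, ∑' k, lineOp G k ^ r ≤ C * ∑' a, G a ^ r := by
  have h0 : 0 < r := by linarith
  have hc : r.HolderConjugate r.conjExponent := Real.HolderConjugate.conjExponent hr
  set q := r.conjExponent
  refine ⟨4 ^ r * (2 ^ (r - 1) * ((∑' b, invJap b ^ 2) ^ r +
    (∑' b, invJap b ^ q) ^ (r / q) * ∑' b, invJap b ^ r)), ?_, fun G => ?_⟩
  · have hq0 := hc.symm.pos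
    have h2 : (∑' b, invJap b ^ 2) ^ r ≠ ⊤ :=
      ENNReal.rpow_ne_top_of_nonneg h0.le tsum_invJap_sq_ne_top
    have h3 : (∑' b, invJap b ^ q) ^ (r / q) ≠ ⊤ :=
      ENNReal.rpow_ne_top_of_nonneg (by positivity) (tsum_invJap_rpow_ne_top hc.symm.lt)
    have h4 : ∑' b, invJap b ^ r ≠ ⊤ := tsum_invJap_rpow_ne_top hr
    have h5 : (4 : ℝ≥0∞) ^ r ≠ ⊤ := ENNReal.rpow_ne_top_of_nonneg h0.le (by simp)
    have h6 : (2 : ℝ≥0∞) ^ (r - 1) ≠ ⊤ := ENNReal.rpow_ne_top_of_nonneg (by linarith) (by simp)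
    finiteness
  · have hA : ∑' k, (∑' a, invJap (k - a) ^ 2 * G a) ^ r
        ≤ (∑' b, invJap b ^ 2) ^ r * ∑' a, G a ^ r := by
      refine le_trans (le_of_eq ?_) (tsum_tsum_mul_rpow_le hr (fun b => invJap b ^ 2) G)
      congr 1 with k
      rw [← tsum_sub_left _ k]
      simp
    have hB : ∑' k, (∑' a, (invJap a * G a) * invJap (k - a)) ^ r
        ≤ ((∑' b, invJap b ^ q) ^ (r / q) * ∑' a, G a ^ r) * ∑' b, invJap b ^ r := by
      refine (tsum_tsum_mul_rpow_le hr (fun a => invJap a * G a) invJap).trans ?_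
      gcongr
      exact tsum_mul_rpow_le_holder hc _ _
    calc ∑' k, lineOp G k ^ r
        ≤ ∑' k, 4 ^ r * (2 ^ (r - 1) * ((∑' a, invJap (k - a) ^ 2 * G a) ^ r +
            (∑' a, (invJap a * G a) * invJap (k - a)) ^ r)) := by
          refine ENNReal.tsum_le_tsum fun k => ?_
          rw [lineOp_eq, ENNReal.mul_rpow_of_nonneg _ _ h0.le]
          gcongr
          exact ENNReal.rpow_add_le_mul_rpow_add_rpow _ _ hr.le
      _ ≤ 4 ^ r * (2 ^ (r - 1) * ((∑' b, invJap b ^ 2) ^ r * ∑' a, G a ^ r +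
            ((∑' b, invJap b ^ q) ^ (r / q) * ∑' a, G a ^ r) * ∑' b, invJap b ^ r)) := by
          rw [ENNReal.tsum_mul_left, ENNReal.tsum_mul_left, ENNReal.tsum_add]
          gcongr
      _ = _ := by ring

lemma lineOp_le_of_le {G : ℤ → ℝ≥0∞} {M : ℝ≥0∞} (hG : ∀ a, G a ≤ M) (k : ℤ) :
    lineOp G k ≤ 12 * (∑' b, invJap b ^ 2) * M := by
  have hmul : ∀ x y : ℝ≥0∞, x * y ≤ x ^ 2 + y ^ 2 := fun x y => by
    rcases le_total x y with h | h
    · calc x * y ≤ y * y := by gcongr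
        _ ≤ _ := by rw [← sq]; exact le_add_self
    · calc x * y ≤ x * x := by gcongr
        _ ≤ _ := by rw [← sq]; exact le_self_add
  calc lineOp G k
      ≤ ∑' a, 4 * (invJap (k - a) ^ 2 + (invJap a ^ 2 + invJap (k - a) ^ 2)) * M := by
        refine ENNReal.tsum_le_tsum fun a => ?_
        gcongr
        · exact hmul _ _
        · exact hG a
    _ = _ := by
        rw [ENNReal.tsum_mul_right, ENNReal.tsum_mul_left, ENNReal.tsum_add, ENNReal.tsum_add,
          tsum_sub_left (fun b => invJap b ^ 2)]
        ring

lemma norm_phi_line_le (t : ℤ) :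
    ‖(-4 * Complex.I) / ((Real.pi : ℂ) * (4 * (t : ℂ) ^ 2 - 1))‖ ≤ 4 / (1 + (t : ℝ) ^ 2) := by
  have h1 : ((Real.pi : ℂ) * (4 * (t : ℂ) ^ 2 - 1)) =
      ((Real.pi * (4 * (t : ℝ) ^ 2 - 1) : ℝ) : ℂ) := by push_cast; ring
  rw [h1, norm_div, Complex.norm_real, norm_mul, norm_neg, Complex.norm_I, mul_one, Real.norm_eq_abs,
    abs_mul, abs_of_pos Real.pi_pos, Complex.norm_ofNat]
  have hpi := Real.pi_gt_three
  have key : 1 + (t : ℝ) ^ 2 ≤ Real.pi * |4 * (t : ℝ) ^ 2 - 1| := by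
    rcases eq_or_ne t 0 with rfl | ht
    · norm_num
      linarith
    · have : (1 : ℝ) ≤ (t : ℝ) ^ 2 := by
        have : (1 : ℤ) ≤ t ^ 2 := by have := sq_pos_of_ne_zero ht; omega
        exact_mod_cast this
      rw [abs_of_pos (by linarith)]
      nlinarith
  gcongr

variable {d : ℕ}

lemma jap_update_triangle (j : Fin d) (k : Fin d → ℤ) (a : ℤ) :
    jap k ≤ jap (Function.update k j a) + |((k j - a : ℤ) : ℝ)| := by
  have hsplit : ∀ m : Fin d → ℤ, ∑ i, ((m i : ℝ)) ^ 2 =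
      (m j : ℝ) ^ 2 + ∑ i ∈ Finset.univ.erase j, ((m i : ℝ)) ^ 2 := fun m =>
    (Finset.add_sum_erase _ _ (Finset.mem_univ j)).symm
  have hrest : ∑ i ∈ Finset.univ.erase j, ((Function.update k j a i : ℤ) : ℝ) ^ 2 =
      ∑ i ∈ Finset.univ.erase j, ((k i : ℝ)) ^ 2 :=
    Finset.sum_congr rfl fun i hi => by
      rw [Function.update_of_ne (Finset.ne_of_mem_erase hi)]
  have hR : 0 ≤ ∑ i ∈ Finset.univ.erase j, ((k i : ℝ)) ^ 2 :=
    Finset.sum_nonneg fun i _ => sq_nonneg _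
  unfold jap
  rw [hsplit k, hsplit (Function.update k j a), hrest, Function.update_self]
  set R := ∑ i ∈ Finset.univ.erase j, ((k i : ℝ)) ^ 2
  refine Real.sqrt_le_iff.mpr ⟨by positivity, ?_⟩
  have h1 : |(a : ℝ)| ≤ Real.sqrt (1 + ((a : ℝ) ^ 2 + R)) := Real.abs_le_sqrt (by linarith)
  have h2 := Real.sq_sqrt (show 0 ≤ 1 + ((a : ℝ) ^ 2 + R) by positivity)
  push_cast
  have h3 := mul_le_mul_of_nonneg_right h1 (abs_nonneg ((k j : ℝ) - a))
  have h4 : (a : ℝ) * (k j - a) ≤ |(a : ℝ)| * |(k j : ℝ) - a| := by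
    rw [← abs_mul]; exact le_abs_self _
  nlinarith [sq_abs ((k j : ℝ) - a)]

lemma sqrt_le_jap (j : Fin d) (m : Fin d → ℤ) : Real.sqrt (1 + (m j : ℝ) ^ 2) ≤ jap m := by
  unfold jap
  gcongr
  exact Finset.single_le_sum (f := fun i => (m i : ℝ) ^ 2) (fun i _ => sq_nonneg _)
    (Finset.mem_univ j)

lemma jap_pos (m : Fin d → ℤ) : 0 < jap m := by
  unfold jap
  have : 0 ≤ ∑ i, ((m i : ℝ)) ^ 2 := Finset.sum_nonneg fun i _ => sq_nonneg _
  positivity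

/-- Bound for one term of `⟨k⟩ |∂ⱼ f(k)|`, with `x` standing for `|f|` at the updated point and
`4 / (1 + b²)` for the bound on `|φⱼ|` at `b = kⱼ - a`. -/
lemma weighted_phi_le (j : Fin d) (k : Fin d → ℤ) (a : ℤ) (x : ℝ) (hx : 0 ≤ x) :
    x * (4 / (1 + ((k j - a : ℤ) : ℝ) ^ 2)) * jap k ≤
      4 * ((Real.sqrt (1 + ((k j - a : ℤ) : ℝ) ^ 2))⁻¹ ^ 2 +
        (Real.sqrt (1 + (a : ℝ) ^ 2))⁻¹ * (Real.sqrt (1 + ((k j - a : ℤ) : ℝ) ^ 2))⁻¹) *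
        (x * jap (Function.update k j a)) := by
  have ht := jap_update_triangle j k a
  have hs := sqrt_le_jap j (Function.update k j a)
  rw [Function.update_self] at hs
  set b : ℝ := ((k j - a : ℤ) : ℝ)
  set J := jap (Function.update k j a)
  set A := Real.sqrt (1 + (a : ℝ) ^ 2)
  set B := Real.sqrt (1 + b ^ 2)
  have hA : 0 < A := Real.sqrt_pos.mpr (by positivity)
  have hB : 0 < B := Real.sqrt_pos.mpr (by positivity)
  have hbB : |b| ≤ B := Real.abs_le_sqrt (by linarith)
  have hB2 : 1 + b ^ 2 = B ^ 2 := (Real.sq_sqrt (by positivity)).symm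
  have hJA : 1 ≤ A⁻¹ * J := by
    rw [inv_mul_eq_div]; exact (one_le_div hA).mpr hs
  rw [hB2]
  calc x * (4 / B ^ 2) * jap k ≤ x * (4 / B ^ 2) * (J + B * (A⁻¹ * J)) := by
        gcongr
        calc jap k ≤ J + |b| := ht
          _ ≤ J + B * 1 := by linarith
          _ ≤ _ := by gcongr
    _ = _ := by field_simp

/-- Along each line parallel to `eⱼ`, the weighted derivative is dominated by `lineOp`. -/
lemma enorm_pd_mul_jap_le (j : Fin d) (f : (Fin d → ℤ) → ℂ) (k : Fin d → ℤ) :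
    ‖pd j f k * (jap k : ℂ)‖ₑ ≤
      lineOp (fun a => ‖f (Function.update k j a) * (jap (Function.update k j a) : ℂ)‖ₑ) (k j) := by
  have hinj : Function.Injective fun a : ℤ => Function.update k j a :=
    Function.update_injective k j
  have hsupp : (Function.support fun m => ‖f m * phi d j (k - m)‖ₑ) ⊆
      Set.range fun a : ℤ => Function.update k j a := by
    intro m hm
    refine ⟨m j, ?_⟩
    by_contra hne
    apply hm
    have : ¬ ∀ i, i ≠ j → (k - m) i = 0 := fun h => hne <| by
      ext i
      rcases eq_or_ne i j with rfl | hi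
      · simp
      · have := h i hi
        simp only [Pi.sub_apply] at this
        simp only [Function.update_of_ne hi]
        omega
    simp only [phi, if_neg this, mul_zero, enorm_zero]
  calc ‖pd j f k * (jap k : ℂ)‖ₑ
      ≤ (∑' m, ‖f m * phi d j (k - m)‖ₑ) * ‖(jap k : ℂ)‖ₑ := by
        rw [enorm_mul]
        gcongr
        exact enorm_tsum_le_tsum_enorm
    _ = ∑' a, ‖f (Function.update k j a) * phi d j (k - Function.update k j a)‖ₑ *
          ‖(jap k : ℂ)‖ₑ := by
        rw [← hinj.tsum_eq hsupp, ENNReal.tsum_mul_right]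
    _ ≤ _ := by
        refine ENNReal.tsum_le_tsum fun a => ?_
        have hphi : ‖phi d j (k - Function.update k j a)‖ ≤
            4 / (1 + ((k j - a : ℤ) : ℝ) ^ 2) := by
          have hz : ∀ i, i ≠ j → (k - Function.update k j a) i = 0 := fun i hi => by
            simp [Function.update_of_ne hi]
          have hj : (k - Function.update k j a) j = k j - a := by simp
          rw [phi, if_pos hz, hj]
          exact norm_phi_line_le _
        have hk := jap_pos k
        have hm := jap_pos (Function.update k j a)
        simp only [invJap]
        rw [← enorm_mul, ← ofReal_norm, ← ofReal_norm,
          ← ENNReal.ofReal_pow (by positivity), ← ENNReal.ofReal_mul (by positivity),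
          ← ENNReal.ofReal_add (by positivity) (by positivity),
          show (4 : ℝ≥0∞) = ENNReal.ofReal 4 by simp, ← ENNReal.ofReal_mul (by positivity),
          ← ENNReal.ofReal_mul (by positivity)]
        apply ENNReal.ofReal_le_ofReal
        rw [norm_mul, norm_mul, norm_mul, Complex.norm_real, Complex.norm_real,
          Real.norm_of_nonneg hk.le, Real.norm_of_nonneg hm.le]
        refine le_trans ?_ (weighted_phi_le j k a _ (norm_nonneg _))
        gcongr

lemma tsum_eq_tsum_lines (j : Fin d) (F : (Fin d → ℤ) → ℝ≥0∞) :
    ∑' k, F k = ∑' (s : {i // i ≠ j} → ℤ) (b : ℤ), F ((Equiv.funSplitAt j ℤ).symm (b, s)) := by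
  rw [← (Equiv.funSplitAt j ℤ).symm.tsum_eq, ENNReal.tsum_prod', ENNReal.tsum_comm]

lemma update_funSplitAt_symm (j : Fin d) (s : {i // i ≠ j} → ℤ) (a b : ℤ) :
    Function.update ((Equiv.funSplitAt j ℤ).symm (b, s)) j a =
      (Equiv.funSplitAt j ℤ).symm (a, s) := by
  ext i
  rcases eq_or_ne i j with rfl | hi
  · simp
  · simp [hi]

/-- `ℓ^{p,1}` boundedness of the discrete partial derivative for `1 < p ≤ ∞`. -/
theorem stmt5 (d : ℕ) (hd : 0 < d) (p : ℝ≥0∞) (hp : 1 < p) :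
    ∃ C : ℝ≥0, 0 < C ∧
      ∀ f : (Fin d → ℤ) → ℂ, wlp p f < ⊤ → ∀ j : Fin d,
        wlp p (pd j f) ≤ (C : ℝ≥0∞) * wlp p f := by
  -- It suffices to find a finite constant, as `C + 1` is then positive.
  suffices h : ∃ C : ℝ≥0∞, C ≠ ⊤ ∧ ∀ (f : (Fin d → ℤ) → ℂ) (j : Fin d),
      wlp p (pd j f) ≤ C * wlp p f by
    obtain ⟨C, hC, h⟩ := h
    refine ⟨C.toNNReal + 1, by positivity, fun f _ j => (h f j).trans ?_⟩
    gcongr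
    rw [ENNReal.coe_add, ENNReal.coe_toNNReal hC]
    exact le_self_add
  rcases eq_or_ne p ⊤ with rfl | hpt
  · refine ⟨12 * ∑' b, invJap b ^ 2, ENNReal.mul_ne_top (by simp) tsum_invJap_sq_ne_top,
      fun f j => ?_⟩
    simp only [wlp, lpn, if_true]
    refine iSup_le fun k => (enorm_pd_mul_jap_le j f k).trans (lineOp_le_of_le (fun a => ?_) _)
    exact le_iSup (fun m => (‖f m * (jap m : ℂ)‖₊ : ℝ≥0∞)) (Function.update k j a)
  · have hr : 1 < p.toReal := by
      rw [← ENNReal.toReal_one]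
      exact (ENNReal.toReal_lt_toReal (by simp) hpt).mpr hp
    have h0 : 0 < p.toReal := by linarith
    obtain ⟨C, hC, h⟩ := tsum_line_rpow_le hr
    refine ⟨C ^ (1 / p.toReal), ENNReal.rpow_ne_top_of_nonneg (by positivity) hC, fun f j => ?_⟩
    simp only [wlp, lpn, if_neg hpt]
    rw [← ENNReal.mul_rpow_of_nonneg _ _ (by positivity)]
    gcongr
    rw [tsum_eq_tsum_lines j, tsum_eq_tsum_lines j, ← ENNReal.tsum_mul_left]
    refine ENNReal.tsum_le_tsum fun s => le_trans (ENNReal.tsum_le_tsum fun b => ?_)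
      (h fun a => ‖f ((Equiv.funSplitAt j ℤ).symm (a, s)) *
        (jap ((Equiv.funSplitAt j ℤ).symm (a, s)) : ℂ)‖ₑ)
    gcongr
    refine (enorm_pd_mul_jap_le j f _).trans (le_of_eq ?_)
    simp only [update_funSplitAt_symm]
    congr 1
    simp
end
end

section
/- There is a constant C (depending only on d) such that for every f ∈ ℓ^{1,1}(ℤ^d), every j = 1,…,d and every α > 0, the cardinality of the set { k ∈ ℤ^d : |∂_j f(k)| ≥ α/⟨k⟩ } is at most C‖f‖_{ℓ^{1,1}(ℤ^d)}/α; i.e. the discrete partial derivative satisfies a weak ℓ^{1,1} bound sup_{α>0} α·|{ |∂_j f(k)| ≥ α⟨k⟩^{-1} }| ≤ C‖f‖_{ℓ^{1,1}(ℤ^d)}. -/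
/-!
Write `k`, `m` for two points on a common line in direction `j` (the kernel `φⱼ(k - m)` vanishes
otherwise) and `a = kⱼ - mⱼ`. Then `|φⱼ(k - m)| ≤ 2(1+|a|)⁻²` and `⟨k⟩ ≤ ⟨m⟩ + |a|`, and elementary
inequalities give (`kernel_le`)
`⟨k⟩ |φⱼ(k - m)| ≤ 3⟨m⟩ ((1+|a|)⁻² + (1+|kⱼ|)⁻²) + 2(1+|kⱼ|)⁻¹`.
Hence `⟨k⟩ |∂ⱼ f(k)| ≤ G(k) + 2 F(k') (1+|kⱼ|)⁻¹`, where `k'` are the transverse coordinates and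
`F(k')` is the `ℓ¹` mass of `f` on the line through `k` (`jap_pd_le`). The function `G` has `ℓ¹` norm
at most a constant times `‖f‖_{ℓ^{1,1}}` (`tsum_GG`), so Chebyshev's inequality applies to it. The
second term is weak `ℓ¹` on each line, with constant `F(k')` (`count_line`), and summing the counts
over all lines gives `‖f‖_{ℓ¹} ≤ ‖f‖_{ℓ^{1,1}}`.
-/

open scoped BigOperators ENNReal NNReal
open MeasureTheory Filter

noncomputable section

/-- The coordinates of `x` transverse to direction `j`. -/
def res {d : ℕ} (j : Fin d) (x : Fin d → ℤ) : {i // i ≠ j} → ℤ := fun i => x i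

/-- The summable profile `(1+|n|)⁻²` dominating the kernel `φⱼ` along its axis. -/
def uu (n : ℤ) : ℝ≥0∞ := ENNReal.ofReal (1 / (1 + |(n : ℝ)|) ^ 2)

/-- The weak-`ℓ¹` profile `(1+|n|)⁻¹`. -/
def vv (n : ℤ) : ℝ≥0∞ := ENNReal.ofReal (1 / (1 + |(n : ℝ)|))

theorem tsum_uu_ne_top : ∑' n, uu n ≠ ⊤ := by
  have h : Summable fun n : ℕ => 1 / (1 + (n : ℝ)) ^ 2 := by
    have := (summable_nat_add_iff 1).2 (Real.summable_one_div_nat_pow.2 (one_lt_two))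
    refine this.congr fun n => ?_
    push_cast
    rw [add_comm]
  have h2 : Summable fun n : ℤ => 1 / (1 + |(n : ℝ)|) ^ 2 := by
    apply Summable.of_nat_of_neg
    · simpa using h
    · simpa using h
  exact h2.tsum_ofReal_ne_top

/-- Summation over `ℤ^d` line by line in direction `j`. -/
theorem tsum_split {d : ℕ} (j : Fin d) (Φ : ℤ → ({i // i ≠ j} → ℤ) → ℝ≥0∞) :
    ∑' x : Fin d → ℤ, Φ (x j) (res j x) = ∑' y, ∑' n, Φ n y := by
  rw [ENNReal.tsum_comm, ← ENNReal.tsum_prod, ← (Equiv.funSplitAt j ℤ).tsum_eq]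
  rfl

theorem one_le_jap {d : ℕ} (m : Fin d → ℤ) : 1 ≤ jap m := by
  unfold jap
  rw [Real.one_le_sqrt]
  have : 0 ≤ ∑ i, ((m i : ℝ)) ^ 2 := by positivity
  linarith

theorem abs_le_jap {d : ℕ} (j : Fin d) (m : Fin d → ℤ) : |(m j : ℝ)| ≤ jap m := by
  unfold jap
  apply Real.le_sqrt_of_sq_le
  rw [sq_abs]
  have := Finset.single_le_sum (f := fun i => (m i : ℝ) ^ 2) (fun i _ => sq_nonneg _)
    (Finset.mem_univ j)
  linarith

theorem jap_le {d : ℕ} (j : Fin d) (x m : Fin d → ℤ) (h : res j x = res j m) :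
    jap x ≤ jap m + |((x j - m j : ℤ) : ℝ)| := by
  have hm := abs_le_jap j m
  have h1 := one_le_jap m
  have e : ∑ i, ((x i : ℝ)) ^ 2 - (x j : ℝ) ^ 2 = ∑ i, ((m i : ℝ)) ^ 2 - (m j : ℝ) ^ 2 := by
    rw [← Finset.add_sum_erase _ _ (Finset.mem_univ j),
      ← Finset.add_sum_erase Finset.univ (fun i => (m i : ℝ) ^ 2) (Finset.mem_univ j)]
    have : ∑ i ∈ Finset.univ.erase j, ((x i : ℝ)) ^ 2
        = ∑ i ∈ Finset.univ.erase j, ((m i : ℝ)) ^ 2 := by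
      refine Finset.sum_congr rfl fun i hi => ?_
      have : x i = m i := congrFun h ⟨i, Finset.ne_of_mem_erase hi⟩
      rw [this]
    rw [this]
    ring
  have hsq : jap m ^ 2 = 1 + ∑ i, ((m i : ℝ)) ^ 2 := Real.sq_sqrt (by positivity)
  rw [show jap x = Real.sqrt (1 + ∑ i, ((x i : ℝ)) ^ 2) from rfl]
  apply Real.sqrt_le_iff.2 ⟨by positivity, ?_⟩
  have key : (m j : ℝ) * (x j - m j) ≤ jap m * |(x j - m j : ℝ)| := by
    refine (le_abs_self _).trans ?_
    rw [abs_mul]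
    gcongr
  push_cast
  have := sq_abs (x j - m j : ℝ)
  nlinarith

theorem norm_phi_le {d : ℕ} (j : Fin d) (a : Fin d → ℤ) :
    ‖phi d j a‖ ≤ 2 / (1 + |(a j : ℝ)|) ^ 2 := by
  unfold phi
  split_ifs
  · have hc : ((Real.pi : ℂ) * (4 * (a j : ℂ) ^ 2 - 1))
        = ((Real.pi * (4 * (a j : ℝ) ^ 2 - 1) : ℝ) : ℂ) := by push_cast; rfl
    rw [hc, norm_div, Complex.norm_real, Real.norm_eq_abs, abs_mul, abs_of_pos Real.pi_pos]
    have hn : ‖(-4 * Complex.I)‖ = 4 := by simp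
    rw [hn]
    -- the comparison `|4n² - 1| ≥ (3/4)(1 + |n|)²` on integers is sharp at `n = ±1`
    have hb : 3 / 4 * (1 + |(a j : ℝ)|) ^ 2 ≤ |4 * (a j : ℝ) ^ 2 - 1| := by
      by_cases h0 : a j = 0
      · simp [h0]; norm_num
      · have h1 : (1 : ℝ) ≤ |(a j : ℝ)| := by exact_mod_cast Int.one_le_abs h0
        refine le_trans ?_ (le_abs_self _)
        rw [← sq_abs (a j : ℝ)]
        nlinarith
    have hp := Real.pi_gt_three
    rw [div_le_div_iff₀ (mul_pos Real.pi_pos (lt_of_lt_of_le (by positivity) hb))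
      (by positivity)]
    have : 3 * (3 / 4 * (1 + |(a j : ℝ)|) ^ 2) ≤ Real.pi * |4 * (a j : ℝ) ^ 2 - 1| := by
      gcongr
    nlinarith [sq_nonneg (1 + |(a j : ℝ)|)]
  · simp; positivity

theorem phi_eq_zero {d : ℕ} (j : Fin d) (x m : Fin d → ℤ) (h : res j x ≠ res j m) :
    phi d j (x - m) = 0 := by
  unfold phi
  rw [if_neg]
  intro h2
  apply h
  funext i
  have := h2 i i.2
  simp only [Pi.sub_apply] at this
  exact sub_eq_zero.1 this

/-- The elementary inequality behind the kernel estimate: with `A = |k - m|`, `K = |k|`, it uses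
`1 + K ≤ (1 + A) + J` to trade `(1+A)⁻¹` for `(1+K)⁻¹` up to
`J (1+K)⁻¹(1+A)⁻¹`, and AM-GM on the latter. -/
theorem real_ineq {A K J : ℝ} (hA : 0 ≤ A) (hK : 0 ≤ K) (hJ : 1 ≤ J) (h : K ≤ A + J) :
    (J + A) * (2 / (1 + A) ^ 2) ≤
      J * (3 * (1 / (1 + A) ^ 2 + 1 / (1 + K) ^ 2)) + 2 * (1 / (1 + K)) := by
  set p := 1 / (1 + A) with hp
  set q := 1 / (1 + K) with hq
  have hp0 : 0 < p := by positivity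
  have hq0 : 0 < q := by positivity
  have e1 : (1 + A) * p = 1 := by rw [hp]; field_simp
  have e2 : (1 + K) * q = 1 := by rw [hq]; field_simp
  have f1 : 2 / (1 + A) ^ 2 = 2 * p ^ 2 := by rw [hp]; field_simp
  have f2 : 1 / (1 + A) ^ 2 = p ^ 2 := by rw [hp]; field_simp
  have f3 : 1 / (1 + K) ^ 2 = q ^ 2 := by rw [hq]; field_simp
  rw [f1, f2, f3]
  have h1 : A * p ^ 2 ≤ p := by nlinarith
  have h2 : p ≤ q + J * (p * q) := by
    have : p * ((1 + K) * q) ≤ p * ((1 + A + J) * q) := by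
      have hKA : 1 + K ≤ 1 + A + J := by linarith
      exact mul_le_mul_of_nonneg_left (mul_le_mul_of_nonneg_right hKA hq0.le) hp0.le
    calc p = p * ((1 + K) * q) := by rw [e2, mul_one]
      _ ≤ p * ((1 + A + J) * q) := this
      _ = ((1 + A) * p) * q + J * (p * q) := by ring
      _ = _ := by rw [e1, one_mul]
  have h3 : J * (p * q) ≤ J * ((p ^ 2 + q ^ 2) / 2) := by
    gcongr
    nlinarith [sq_nonneg (p - q)]
  nlinarith [mul_nonneg (zero_le_one.trans hJ) (sq_nonneg q),
    mul_nonneg (zero_le_one.trans hJ) (sq_nonneg p)]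

/-- Weighted kernel estimate: the weight `⟨x⟩` is absorbed into `⟨m⟩` times a summable kernel, up
to a remainder `(1+|xⱼ|)⁻¹` that does not depend on the position of `m` on the line. -/
theorem kernel_le {d : ℕ} (j : Fin d) (x m : Fin d → ℤ) (h : res j x = res j m) :
    ENNReal.ofReal (jap x) * ‖phi d j (x - m)‖ₑ ≤
      ENNReal.ofReal (jap m) * (3 * (uu (x j - m j) + uu (x j))) + 2 * vv (x j) := by
  have hm := one_le_jap m
  have hx := one_le_jap x
  have e : ENNReal.ofReal (jap m) * (3 * (uu (x j - m j) + uu (x j))) + 2 * vv (x j)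
      = ENNReal.ofReal (jap m * (3 * (1 / (1 + |((x j - m j : ℤ) : ℝ)|) ^ 2
        + 1 / (1 + |(x j : ℝ)|) ^ 2)) + 2 * (1 / (1 + |(x j : ℝ)|))) := by
    unfold uu vv
    rw [ENNReal.ofReal_add (by positivity) (by positivity), ENNReal.ofReal_mul (by positivity),
      ENNReal.ofReal_mul (by positivity), ENNReal.ofReal_mul (by positivity),
      ENNReal.ofReal_add (by positivity) (by positivity)]
    simp
  rw [e, ← ofReal_norm, ← ENNReal.ofReal_mul (by positivity)]
  apply ENNReal.ofReal_le_ofReal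
  refine le_trans ?_ (real_ineq (abs_nonneg _) (abs_nonneg _) hm ?_)
  · exact mul_le_mul (jap_le j x m h) (norm_phi_le j (x - m)) (norm_nonneg _) (by positivity)
  · have := abs_le_jap j m
    have h2 := abs_add_le ((x j - m j : ℤ) : ℝ) (m j : ℝ)
    push_cast at h2 ⊢
    rw [sub_add_cancel] at h2
    linarith

theorem enorm_pd_le {d : ℕ} (j : Fin d) (f : (Fin d → ℤ) → ℂ) (x : Fin d → ℤ) :
    ‖pd j f x‖ₑ ≤ ∑' m, ‖f m‖ₑ * ‖phi d j (x - m)‖ₑ := by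
  unfold pd dconv
  simp_rw [← enorm_mul]
  exact enorm_tsum_le_tsum_enorm

open scoped Classical in
/-- The part of `⟨x⟩ |∂ⱼ f (x)|` which is controlled in `ℓ¹`. -/
def GG {d : ℕ} (j : Fin d) (f : (Fin d → ℤ) → ℂ) (x : Fin d → ℤ) : ℝ≥0∞ :=
  ∑' m, ‖f m‖ₑ * ENNReal.ofReal (jap m) *
    (if res j x = res j m then 3 * (uu (x j - m j) + uu (x j)) else 0)

open scoped Classical in
/-- The mass of `f` on the line in direction `j` with transverse coordinates `y`. -/
def FF {d : ℕ} (j : Fin d) (f : (Fin d → ℤ) → ℂ) (y : {i // i ≠ j} → ℤ) : ℝ≥0∞ :=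
  ∑' m, if y = res j m then ‖f m‖ₑ else 0

theorem jap_pd_le {d : ℕ} (j : Fin d) (f : (Fin d → ℤ) → ℂ) (x : Fin d → ℤ) :
    ENNReal.ofReal (jap x) * ‖pd j f x‖ₑ ≤ GG j f x + FF j f (res j x) * (2 * vv (x j)) := by
  classical
  unfold GG FF
  rw [← ENNReal.tsum_mul_right, ← ENNReal.tsum_add]
  refine (mul_le_mul_right (enorm_pd_le j f x) _).trans ?_
  rw [← ENNReal.tsum_mul_left]
  refine ENNReal.tsum_le_tsum fun m => ?_
  by_cases h : res j x = res j m
  · simp only [h, if_true]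
    have := mul_le_mul_right (kernel_le j x m h) ‖f m‖ₑ
    calc _ = ‖f m‖ₑ * (ENNReal.ofReal (jap x) * ‖phi d j (x - m)‖ₑ) := by ring
      _ ≤ _ := this
      _ = _ := by ring
  · simp [phi_eq_zero j x m h]

theorem tsum_GG {d : ℕ} (j : Fin d) (f : (Fin d → ℤ) → ℂ) :
    ∑' x, GG j f x = 6 * (∑' n, uu n) * ∑' m, ‖f m‖ₑ * ENNReal.ofReal (jap m) := by
  classical
  unfold GG
  rw [ENNReal.tsum_comm, ← ENNReal.tsum_mul_left]
  refine tsum_congr fun m => ?_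
  rw [ENNReal.tsum_mul_left, mul_comm]
  congr 1
  rw [tsum_split j fun n y => if y = res j m then 3 * (uu (n - m j) + uu n) else 0,
    tsum_eq_single (res j m) (by intro y hy; simp [hy])]
  simp only [if_true]
  have hshift : ∑' n, uu (n - m j) = ∑' n, uu n := (Equiv.subRight (m j)).tsum_eq uu
  rw [ENNReal.tsum_mul_left, ENNReal.tsum_add, hshift]
  ring

theorem tsum_FF {d : ℕ} (j : Fin d) (f : (Fin d → ℤ) → ℂ) :
    ∑' y, FF j f y = ∑' m, ‖f m‖ₑ := by
  unfold FF
  rw [ENNReal.tsum_comm]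
  refine tsum_congr fun m => ?_
  rw [tsum_eq_single (res j m) (by intro y hy; simp [hy])]
  simp

open scoped Classical in
/-- Weak-type bound for `n ↦ (1+|n|)⁻¹` on a single line. Since this profile is at most `1`, the
count vanishes for large levels, so no additive error appears. -/
theorem count_line (α : ℝ) (hα : 0 < α) (F : ℝ≥0∞) :
    ENNReal.ofReal α * ∑' n : ℤ, (if ENNReal.ofReal (α / 2) ≤ F * (2 * vv n)
      then (1 : ℝ≥0∞) else 0) ≤ 8 * F := by
  by_cases hF : F = ⊤
  · subst hF; simp
  lift F to ℝ≥0 using hF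
  set p := ⌊4 * (F : ℝ) / α⌋₊ with hp
  have hpl : (p : ℝ) * α ≤ 4 * F := by
    rw [← le_div_iff₀ hα]
    exact Nat.floor_le (by positivity)
  have hs : ∀ n : ℤ, n ∉ Finset.Ioo (-(p : ℤ)) p →
      (if ENNReal.ofReal (α / 2) ≤ F * (2 * vv n) then (1 : ℝ≥0∞) else 0) = 0 := by
    intro n hn
    rw [if_neg]
    intro hc
    apply hn
    have e : (F : ℝ≥0∞) * (2 * vv n) = ENNReal.ofReal (F * (2 * (1 / (1 + |(n : ℝ)|)))) := by
      unfold vv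
      rw [ENNReal.ofReal_mul (by positivity), ENNReal.ofReal_mul (by positivity)]
      simp
    rw [e, ENNReal.ofReal_le_ofReal_iff (by positivity)] at hc
    have h1 : α * (1 + |(n : ℝ)|) ≤ 4 * F := by
      have h0 : 0 < 1 + |(n : ℝ)| := by positivity
      have := mul_le_mul_of_nonneg_right hc h0.le
      have e2 : (F : ℝ) * (2 * (1 / (1 + |(n : ℝ)|))) * (1 + |(n : ℝ)|) = 2 * F := by
        field_simp
      rw [e2] at this
      linarith
    have h2 : n.natAbs + 1 ≤ p := by
      apply Nat.le_floor
      rw [le_div_iff₀ hα]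
      push_cast
      rw [Nat.cast_natAbs]
      push_cast
      linarith
    rw [Finset.mem_Ioo]
    omega
  rw [tsum_eq_sum hs]
  have hcard : ∑ n ∈ Finset.Ioo (-(p : ℤ)) p,
      (if ENNReal.ofReal (α / 2) ≤ F * (2 * vv n) then (1 : ℝ≥0∞) else 0)
        ≤ ENNReal.ofReal (2 * p) := by
    refine (Finset.sum_le_sum (g := fun _ => 1) fun i _ => ?_).trans ?_
    · split_ifs <;> simp
    · rw [Finset.sum_const, Int.card_Ioo, nsmul_one, ← ENNReal.ofReal_natCast]
      apply ENNReal.ofReal_le_ofReal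
      have : ((p : ℤ) - -(p : ℤ) - 1).toNat ≤ 2 * p := by omega
      exact_mod_cast this
  refine (mul_le_mul_right hcard _).trans ?_
  rw [← ENNReal.ofReal_mul hα.le]
  have : (8 : ℝ≥0∞) * F = ENNReal.ofReal (8 * F) := by
    rw [ENNReal.ofReal_mul (by positivity)]; simp
  rw [this]
  apply ENNReal.ofReal_le_ofReal
  nlinarith

open scoped Classical in
/-- At each point of the level set one of the two parts of `⟨x⟩ |∂ⱼ f (x)|` is at least `α/2`. -/
theorem pointwise {d : ℕ} (j : Fin d) (f : (Fin d → ℤ) → ℂ) (α : ℝ) (hα : 0 < α)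
    (x : Fin d → ℤ) :
    ENNReal.ofReal α * (if α / jap x ≤ ‖pd j f x‖ then (1 : ℝ≥0∞) else 0) ≤
      2 * GG j f x + ENNReal.ofReal α *
        (if ENNReal.ofReal (α / 2) ≤ FF j f (res j x) * (2 * vv (x j)) then 1 else 0) := by
  by_cases h : α / jap x ≤ ‖pd j f x‖
  swap
  · simp [h]
  by_cases h2 : ENNReal.ofReal (α / 2) ≤ FF j f (res j x) * (2 * vv (x j))
  · simp [h, h2]
  simp only [h, h2, if_true, if_false, mul_one, mul_zero, add_zero]
  have hj : 0 < jap x := zero_lt_one.trans_le (one_le_jap x)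
  have hs : ENNReal.ofReal α = ENNReal.ofReal (α / 2) + ENNReal.ofReal (α / 2) := by
    rw [← ENNReal.ofReal_add (by positivity) (by positivity), add_halves]
  have h3 : ENNReal.ofReal α ≤ GG j f x + FF j f (res j x) * (2 * vv (x j)) := by
    refine le_trans ?_ (jap_pd_le j f x)
    rw [← ofReal_norm, ← ENNReal.ofReal_mul hj.le]
    apply ENNReal.ofReal_le_ofReal
    rw [div_le_iff₀ hj] at h
    linarith
  have h4 : ENNReal.ofReal (α / 2) ≤ GG j f x := by
    by_contra h5
    rw [not_le] at h2 h5
    have := ENNReal.add_lt_add h5 h2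
    rw [← hs] at this
    exact absurd h3 (not_le.2 this)
  rw [hs, two_mul]
  gcongr

open scoped Classical in
/-- weak `ℓ^{1,1}` bound for the discrete partial derivative:
`α · #{k : |∂ⱼf(k)| ≥ α/⟨k⟩} ≤ C‖f‖_{ℓ^{1,1}}` for all `α > 0`. -/
theorem stmt6 (d : ℕ) (hd : 0 < d) :
    ∃ C : ℝ≥0, 0 < C ∧
      ∀ f : (Fin d → ℤ) → ℂ,
        (∑' m, (‖f m‖₊ : ℝ≥0∞) * ENNReal.ofReal (jap m)) < ⊤ →
        ∀ (j : Fin d) (α : ℝ), 0 < α →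
          ENNReal.ofReal α *
              (∑' x : Fin d → ℤ, if α / jap x ≤ ‖pd j f x‖ then (1 : ℝ≥0∞) else 0) ≤
            (C : ℝ≥0∞) * ∑' m, (‖f m‖₊ : ℝ≥0∞) * ENNReal.ofReal (jap m) := by
  refine ⟨12 * (∑' n, uu n).toNNReal + 8, by positivity, ?_⟩
  intro f _ j α hα
  have hN : ∀ m, (‖f m‖₊ : ℝ≥0∞) = ‖f m‖ₑ := fun m => rfl
  simp only [hN]
  have hF : ∑' m, ‖f m‖ₑ ≤ ∑' m, ‖f m‖ₑ * ENNReal.ofReal (jap m) := by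
    refine ENNReal.tsum_le_tsum fun m => le_mul_of_one_le_right' ?_
    exact ENNReal.one_le_ofReal.2 (one_le_jap m)
  rw [← ENNReal.tsum_mul_left]
  refine (ENNReal.tsum_le_tsum fun x => pointwise j f α hα x).trans ?_
  rw [ENNReal.tsum_add, ENNReal.tsum_mul_left, tsum_GG,
    tsum_split j fun n y => ENNReal.ofReal α *
      (if ENNReal.ofReal (α / 2) ≤ FF j f y * (2 * vv n) then 1 else 0)]
  have h2 : ∑' y, ∑' n, ENNReal.ofReal α *
      (if ENNReal.ofReal (α / 2) ≤ FF j f y * (2 * vv n) then 1 else 0)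
      ≤ 8 * ∑' m, ‖f m‖ₑ * ENNReal.ofReal (jap m) := by
    refine le_trans (ENNReal.tsum_le_tsum (g := fun y => 8 * FF j f y) fun y => ?_) ?_
    · rw [ENNReal.tsum_mul_left]
      exact count_line α hα _
    · rw [ENNReal.tsum_mul_left, tsum_FF]
      gcongr
  refine (add_le_add_right h2 _).trans (le_of_eq ?_)
  push_cast
  rw [ENNReal.coe_toNNReal tsum_uu_ne_top]
  ring
end
end

section
/- Let u ∈ C²([0,T]; ℓ²(ℤ^d)) satisfy the discrete linear wave equation ∂_t² u(x,t) − Δu(x,t) = 0 for all (x,t) ∈ ℤ^d × [0,T]. Then the energy E(t) := (1/2) Σ_{k∈ℤ^d} ( |∂_t u(k,t)|² + Σ_{j=1}^d |∂_j u(k,t)|² ) is conserved: E(t) = E(0) for all t ∈ [0,T]. -/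
/-!
The kernel of `∂ⱼ` is `-i ψ` along the `j`-th axis, with `ψ(a) = 4/(π(4a²-1))`. The point is that the
autocorrelation `∑ₐ ψ(a) ψ(a+n)` equals `2` at `n = 0`, `-1` at `n = ±1` and `0` elsewhere, so that
`∂ⱼ* ∂ⱼ` is minus the second difference in direction `j` (`hasSum_psi_mul`). To see this, write
`ψ(a) = (2/π)(g(a-1) - g(a))` with `g(a) = 1/(2a+1)`; the translates of `g` are orthogonal in `ℓ²(ℤ)`,
because `g(a) g(a+n) = (g(a) - g(a+n))/(2n)` telescopes, and `∑ g² = π²/4` by the value of `ζ(2)`.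

Consequently `∑ₘ |∂ⱼf(m)|² = ∑ₘ |f(m) - f(m-eⱼ)|²` for every `f ∈ ℓ²` (`tsum_pd_sq`). This follows by
expanding `‖∑ₐ ψ(a) Sᵃ f‖²` with `S` the translation by `eⱼ`: the inner product of `Sᵃ f` and `Sᵇ f`
depends on `b - a` only (`inner_self_psi_sum`).

The energy is therefore `(‖∂ₜu‖² + ∑ⱼ ‖u - Sⱼu‖²)/2` with norms in the Hilbert space `ℓ²(ℤ^d)`. It is
differentiable in time, and by summation by parts (`sum_inner_diff`) its derivative is
`Re⟨∂ₜu, ∂ₜ²u - Δu⟩ = 0`.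
-/

open scoped BigOperators ENNReal NNReal
open MeasureTheory Filter

noncomputable section

/-- Weighted `ℓ^{2,k}` norm: the `ℓ²` norm of `m ↦ ⟨m⟩^k f(m)`. -/
def w2 {d : ℕ} (k : ℕ) (f : (Fin d → ℤ) → ℂ) : ℝ≥0∞ :=
  lpn 2 (fun m => ((jap m ^ k : ℝ) : ℂ) * f m)

/-- Discrete Laplacian on `ℤ^d`. -/
def lap {d : ℕ} (u : (Fin d → ℤ) → ℂ) (x : Fin d → ℤ) : ℂ :=
  ∑ j, (u (x + Pi.single j 1) + u (x - Pi.single j 1) - 2 * u x)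

/-- Continuity of a curve `t ↦ f(·,t)` into `ℓ^{2,k}(ℤ^d)` on a set `S` of times. -/
def ContW {d : ℕ} (k : ℕ) (S : Set ℝ) (f : ℝ → (Fin d → ℤ) → ℂ) : Prop :=
  ∀ t ∈ S, Tendsto (fun s => w2 k (fun m => f s m - f t m))
    (nhdsWithin t S) (nhds (0 : ℝ≥0∞))

/-- `f'` is the derivative (in the `ℓ^{2,k}(ℤ^d)` norm) of the curve `t ↦ f(·,t)` on `S`. -/
def DerivW {d : ℕ} (k : ℕ) (S : Set ℝ) (f f' : ℝ → (Fin d → ℤ) → ℂ) : Prop :=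
  ∀ t ∈ S, Tendsto
    (fun s => w2 k (fun m => (s - t)⁻¹ • (f s m - f t m) - f' t m))
    (nhdsWithin t (S \ {t})) (nhds (0 : ℝ≥0∞))

/-- `u ∈ C²(S; ℓ^{2,k}(ℤ^d))`, with first and second time derivatives `u1`, `u2`. -/
structure IsC2 {d : ℕ} (k : ℕ) (S : Set ℝ) (u u1 u2 : ℝ → (Fin d → ℤ) → ℂ) : Prop where
  mem0 : ∀ t ∈ S, w2 k (u t) < ⊤
  mem1 : ∀ t ∈ S, w2 k (u1 t) < ⊤
  mem2 : ∀ t ∈ S, w2 k (u2 t) < ⊤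
  cont0 : ContW k S u
  cont1 : ContW k S u1
  cont2 : ContW k S u2
  hder1 : DerivW k S u u1
  hder2 : DerivW k S u1 u2

/-! ### The one-dimensional kernel -/

/-- The odd reciprocal `g(a) = 1/(2a+1)` on `ℤ`. -/
def oddInv (a : ℤ) : ℝ := 1 / (2 * (a : ℝ) + 1)

lemma two_mul_add_one_ne_zero (a : ℤ) : (2 * (a : ℝ) + 1) ≠ 0 := by
  have h : (2 * a + 1 : ℤ) ≠ 0 := by omega
  exact_mod_cast h

lemma hasSum_int_of_nat {f : ℤ → ℝ} {m m' : ℝ} (h1 : HasSum (fun n : ℕ => f n) m)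
    (h2 : HasSum (fun n : ℕ => f (-((n : ℤ) + 1))) m') : HasSum f (m + m') :=
  HasSum.of_nat_of_neg_add_one h1 h2

lemma hasSum_even_sq :
    HasSum (fun k : ℕ => (1 : ℝ) / ((2 * k : ℕ) : ℝ) ^ 2) (Real.pi ^ 2 / 24) := by
  have h := hasSum_zeta_two.mul_left (1 / 4 : ℝ)
  rw [show (1 / 4 : ℝ) * (Real.pi ^ 2 / 6) = Real.pi ^ 2 / 24 by ring] at h
  convert! h using 2 with k
  push_cast
  rw [mul_pow, div_mul_div_comm]
  norm_num

lemma hasSum_odd_sq :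
    HasSum (fun k : ℕ => (1 : ℝ) / ((2 * k + 1 : ℕ) : ℝ) ^ 2) (Real.pi ^ 2 / 8) := by
  have hinj : Function.Injective (fun k : ℕ => 2 * k + 1) := fun a b h => by
    simp only at h
    omega
  have hodd : Summable (fun k : ℕ => (1 : ℝ) / ((2 * k + 1 : ℕ) : ℝ) ^ 2) :=
    hasSum_zeta_two.summable.comp_injective hinj
  have hval := (HasSum.even_add_odd (f := fun n : ℕ => (1 : ℝ) / (n : ℝ) ^ 2)
    hasSum_even_sq hodd.hasSum).unique hasSum_zeta_two
  have h := hodd.hasSum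
  rwa [show ∑' k : ℕ, (1 : ℝ) / ((2 * k + 1 : ℕ) : ℝ) ^ 2 = Real.pi ^ 2 / 8 by linarith] at h

lemma hasSum_oddInv_sq : HasSum (fun a : ℤ => oddInv a ^ 2) (Real.pi ^ 2 / 4) := by
  have hN := hasSum_odd_sq
  have h1 : HasSum (fun k : ℕ => oddInv (k : ℤ) ^ 2) (Real.pi ^ 2 / 8) := by
    convert! hN using 2 with k
    simp [oddInv]
  have h2 : HasSum (fun k : ℕ => oddInv (-((k : ℤ) + 1)) ^ 2) (Real.pi ^ 2 / 8) := by
    convert! hN using 2 with k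
    simp only [oddInv, div_pow, one_pow]
    push_cast
    ring_nf
  have h := hasSum_int_of_nat (f := fun a : ℤ => oddInv a ^ 2) h1 h2
  rwa [show Real.pi ^ 2 / 8 + Real.pi ^ 2 / 8 = Real.pi ^ 2 / 4 by ring] at h

lemma summable_oddInv_mul (n : ℤ) : Summable (fun a : ℤ => oddInv a * oddInv (a + n)) := by
  have h1 := hasSum_oddInv_sq.summable
  have h2 : Summable (fun a : ℤ => oddInv (a + n) ^ 2) := (Equiv.addRight n).summable_iff.2 h1
  refine Summable.of_norm_bounded (h1.add h2) fun a => ?_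
  rw [Real.norm_eq_abs, abs_le]
  constructor <;> nlinarith [sq_nonneg (oddInv a + oddInv (a + n)),
    sq_nonneg (oddInv a - oddInv (a + n)), sq_nonneg (oddInv a), sq_nonneg (oddInv (a + n))]

lemma oddInv_sub (a n : ℤ) :
    oddInv a - oddInv (a + n) = 2 * n * (oddInv a * oddInv (a + n)) := by
  have h1 := two_mul_add_one_ne_zero a
  have h2 := two_mul_add_one_ne_zero (a + n)
  simp only [oddInv]
  field_simp
  push_cast
  ring

lemma tendsto_oddInv : Tendsto (fun n : ℕ => oddInv n) atTop (nhds 0) := by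
  have h := hasSum_oddInv_sq.summable.comp_injective (i := fun n : ℕ => (n : ℤ))
    Nat.cast_injective
  have h2 := (h.tendsto_atTop_zero).sqrt
  simp only [Function.comp_def, Real.sqrt_zero, Real.sqrt_sq_eq_abs] at h2
  exact (tendsto_zero_iff_abs_tendsto_zero _).2 h2

lemma hasSum_oddInv_sub_one : HasSum (fun a : ℤ => oddInv a - oddInv (a + 1)) 0 := by
  have hs : Summable (fun a : ℤ => oddInv a - oddInv (a + 1)) := by
    simp_rw [oddInv_sub]
    exact (summable_oddInv_mul 1).mul_left _
  have h1 : HasSum (fun n : ℕ => oddInv (n : ℤ) - oddInv ((n : ℤ) + 1)) 1 := by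
    refine (Summable.hasSum_iff_tendsto_nat
      (hs.comp_injective (i := fun n : ℕ => (n : ℤ)) Nat.cast_injective)).2 ?_
    simp only [Function.comp_apply]
    have : ∀ N : ℕ, ∑ i ∈ Finset.range N, (oddInv (i : ℤ) - oddInv ((i : ℤ) + 1))
        = 1 - oddInv N := by
      intro N
      have := Finset.sum_range_sub' (fun i : ℕ => oddInv (i : ℤ)) N
      simpa [oddInv] using this
    simp_rw [this]
    simpa using tendsto_oddInv.const_sub 1
  have h2 : HasSum (fun n : ℕ => oddInv (-((n : ℤ) + 1)) - oddInv (-((n : ℤ) + 1) + 1)) (-1) := by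
    refine (Summable.hasSum_iff_tendsto_nat
      (hs.comp_injective (i := fun n : ℕ => (-((n : ℤ) + 1))) (fun a b h => by simpa using h))).2 ?_
    simp only [Function.comp_apply]
    have : ∀ N : ℕ, ∑ i ∈ Finset.range N,
        (oddInv (-((i : ℤ) + 1)) - oddInv (-((i : ℤ) + 1) + 1)) = oddInv (-(N : ℤ)) - 1 := by
      intro N
      have := Finset.sum_range_sub (fun i : ℕ => oddInv (-(i : ℤ))) N
      rw [show oddInv (-((0 : ℕ) : ℤ)) = 1 by simp [oddInv]] at this
      rw [← this]
      refine Finset.sum_congr rfl fun i _ => ?_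
      rw [show -((i : ℤ) + 1) + 1 = -i by ring]
      push_cast
      rfl
    simp_rw [this]
    rw [← zero_sub]
    refine Tendsto.sub_const ?_ 1
    rw [← tendsto_add_atTop_iff_nat 1]
    have h := tendsto_oddInv.neg
    rw [neg_zero] at h
    refine h.congr fun n => ?_
    have h1 := two_mul_add_one_ne_zero n
    have h2 := two_mul_add_one_ne_zero (-((n + 1 : ℕ) : ℤ))
    simp only [oddInv]
    rw [neg_eq_iff_add_eq_zero]
    field_simp
    push_cast
    ring
  have h := hasSum_int_of_nat (f := fun a : ℤ => oddInv a - oddInv (a + 1)) h1 h2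
  rwa [add_neg_cancel] at h

/-- The sums telescope; the boundary terms at `±∞` vanish. -/
lemma hasSum_oddInv_sub (n : ℤ) : HasSum (fun a : ℤ => oddInv a - oddInv (a + n)) 0 := by
  have hshift : ∀ m : ℤ, HasSum (fun a : ℤ => oddInv (a + m) - oddInv (a + m + 1)) 0 :=
    fun m => (Equiv.addRight m).hasSum_iff.2 hasSum_oddInv_sub_one
  induction n using Int.induction_on with
  | zero => simp
  | succ i ih =>
    convert! ih.add (hshift i) using 1
    · funext a
      rw [← add_assoc]; ring
    · simp
  | pred i ih =>
    convert! ih.sub (hshift (-i - 1)) using 1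
    · funext a
      rw [show a + (-(i : ℤ) - 1) + 1 = a + -i by ring]; ring
    · simp

/-- Up to the factor `π²/4`, the translates of `oddInv` are orthonormal in `ℓ²(ℤ)`. -/
lemma hasSum_oddInv_mul (n : ℤ) : HasSum (fun a : ℤ => oddInv a * oddInv (a + n))
    (if n = 0 then Real.pi ^ 2 / 4 else 0) := by
  split_ifs with h
  · subst h
    simpa [sq] using hasSum_oddInv_sq
  · have hn : (2 * (n : ℝ)) ≠ 0 := by simpa using h
    have := (hasSum_oddInv_sub n).mul_left (2 * (n : ℝ))⁻¹
    simp_rw [oddInv_sub, inv_mul_cancel_left₀ hn] at this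
    simpa using this

/-- The real kernel `ψ(a) = 4/(π(4a²-1))`, so that `φⱼ(a·eⱼ) = -i ψ(a)`. -/
def psi (a : ℤ) : ℝ := 4 / (Real.pi * (4 * (a : ℝ) ^ 2 - 1))

lemma psi_eq_sub (a : ℤ) : psi a = 2 / Real.pi * (oddInv (a + -1) - oddInv a) := by
  have h1 := two_mul_add_one_ne_zero a
  have h2 := two_mul_add_one_ne_zero (a + -1)
  push_cast at h2
  have h3 : (4 * (a : ℝ) ^ 2 - 1) ≠ 0 := by
    rw [show (4 * (a : ℝ) ^ 2 - 1) = (2 * (a : ℝ) + 1) * (2 * ((a : ℝ) + -1) + 1) by ring]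
    exact mul_ne_zero h1 h2
  have := Real.pi_ne_zero
  simp only [psi, oddInv]
  push_cast
  rw [div_sub_div _ _ h2 h1, div_mul_div_comm, div_eq_div_iff (by positivity) (by positivity)]
  ring

lemma summable_psi : Summable psi := by
  have : psi = fun a => 4 / Real.pi * (oddInv a * oddInv (a + -1)) := by
    funext a
    have := oddInv_sub a (-1)
    push_cast at this
    rw [psi_eq_sub]
    linear_combination (-2 / Real.pi) * this
  rw [this]
  exact (summable_oddInv_mul _).mul_left _

/-- The autocorrelation of `psi` is the kernel of minus the one-dimensional Laplacian. -/
lemma hasSum_psi_mul (n : ℤ) : HasSum (fun a : ℤ => psi a * psi (a + n))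
    (2 * (if n = 0 then 1 else 0) - (if n = -1 then 1 else 0) - (if n = 1 then 1 else 0)) := by
  have h0 := hasSum_oddInv_mul n
  have h0' := (Equiv.addRight (-1 : ℤ)).hasSum_iff.2 h0
  have h1 := (Equiv.addRight (-1 : ℤ)).hasSum_iff.2 (hasSum_oddInv_mul (n + 1))
  have h2 := hasSum_oddInv_mul (n + -1)
  have hpi := Real.pi_ne_zero
  convert! (((h0.add h0').sub h1).sub h2).mul_left (4 / Real.pi ^ 2) using 1
  · funext a
    simp only [psi_eq_sub, Function.comp_apply, Equiv.coe_addRight]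
    rw [show a + -1 + (n + 1) = a + n by ring, show a + -1 + n = a + n + -1 by ring,
      show a + (n + -1) = a + n + -1 by ring]
    field_simp
    ring
  · have e1 : n + 1 = 0 ↔ n = -1 := by omega
    have e2 : n + -1 = 0 ↔ n = 1 := by omega
    simp only [e1, e2]
    split_ifs <;> field_simp <;> ring

/-! ### The norm of a `psi`-combination in a Hilbert space -/

/-- If the Gram matrix of a two-sided sequence `w` in a Hilbert space is Toeplitz, then
`∑ ψ(a) w(a)` has the same norm as `w 0 - w 1`. -/
lemma inner_self_psi_sum {H : Type*} [NormedAddCommGroup H] [InnerProductSpace ℂ H]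
    (w : ℤ → H) (hw : ∀ a b, inner ℂ (w a) (w b) = inner ℂ (w 0) (w (b - a)))
    (x : H) (hx : HasSum (fun a => (psi a : ℂ) • w a) x) :
    inner ℂ x x = inner ℂ (w 0 - w 1) (w 0 - w 1) := by
  set c : ℤ → ℂ := fun n => inner ℂ (w 0) (w n) with hc
  have hnorm : ∀ a, ‖w a‖ = ‖w 0‖ := by
    intro a
    have h := hw a a
    rw [sub_self, inner_self_eq_norm_sq_to_K, inner_self_eq_norm_sq_to_K] at h
    have h' : ‖w a‖ ^ 2 = ‖w 0‖ ^ 2 := by exact_mod_cast h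
    exact (sq_eq_sq₀ (norm_nonneg _) (norm_nonneg _)).1 h'
  have hcb : ∀ n, ‖c n‖ ≤ ‖w 0‖ ^ 2 := by
    intro n
    refine (norm_inner_le_norm _ _).trans ?_
    rw [hnorm n, sq]
  have hexp : inner ℂ x x = ∑' a, ∑' b, (psi a : ℂ) * psi b * c (b - a) := by
    have h1 : HasSum (fun a => inner ℂ ((psi a : ℂ) • w a) x) (inner ℂ x x) := by
      have := (hx.mapL (innerSL ℂ x)).star
      simpa [← starRingEnd_apply, inner_conj_symm] using this
    rw [← h1.tsum_eq]
    refine tsum_congr fun a => ?_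
    have h2 := hx.mapL (innerSL ℂ ((psi a : ℂ) • w a))
    rw [innerSL_apply_apply] at h2
    rw [← h2.tsum_eq]
    refine tsum_congr fun b => ?_
    rw [innerSL_apply_apply, inner_smul_left, inner_smul_right, hw a b, Complex.conj_ofReal,
      mul_assoc]
  have hpsi : Summable fun a => ‖(psi a : ℂ)‖ := by
    simpa using summable_psi.abs
  have hsum : Summable (fun p : ℤ × ℤ => (psi p.1 : ℂ) * psi (p.1 + p.2) * c p.2) := by
    have hs : Summable (fun p : ℤ × ℤ => (psi p.1 : ℂ) * psi p.2 * c (p.2 - p.1)) := by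
      refine Summable.of_norm_bounded ((hpsi.mul_norm hpsi).mul_right (‖w 0‖ ^ 2)) fun p => ?_
      rw [norm_mul]
      exact mul_le_mul_of_nonneg_left (hcb _) (norm_nonneg _)
    let e : ℤ × ℤ ≃ ℤ × ℤ :=
      { toFun := fun p => (p.1, p.1 + p.2)
        invFun := fun p => (p.1, p.2 - p.1)
        left_inv := fun p => by simp
        right_inv := fun p => by simp }
    have := e.summable_iff.2 hs
    simpa [Function.comp_def, e] using this
  have hswap : inner ℂ x x = ∑' n, ∑' a, (psi a : ℂ) * psi (a + n) * c n := by
    rw [hexp, Summable.tsum_comm (f := fun a n => (psi a : ℂ) * psi (a + n) * c n) hsum]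
    refine tsum_congr fun a => ?_
    rw [← (Equiv.addLeft a).tsum_eq]
    simp
  have hcorr : ∀ n, ∑' a, (psi a : ℂ) * psi (a + n) * c n =
      (if n = 0 then 2 * c 0 else 0) - (if n = -1 then c (-1) else 0)
        - (if n = 1 then c 1 else 0) := by
    intro n
    have h := (Complex.hasSum_ofReal.2 (hasSum_psi_mul n)).mul_right (c n)
    push_cast at h
    rw [h.tsum_eq]
    rcases eq_or_ne n 0 with rfl | h0
    · simp
    rcases eq_or_ne n 1 with rfl | h1
    · simp
    rcases eq_or_ne n (-1) with rfl | h2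
    · simp
    simp [h0, h1, h2]
  rw [hswap, tsum_congr hcorr,
    (((hasSum_ite_eq (0 : ℤ) (2 * c 0)).sub (hasSum_ite_eq (-1 : ℤ) (c (-1)))).sub
      (hasSum_ite_eq (1 : ℤ) (c 1))).tsum_eq,
    inner_sub_left, inner_sub_right, inner_sub_right, hw 1 0, hw 1 1]
  simp only [hc, sub_self, zero_sub]
  ring

/-! ### The Hilbert space `ℓ²(ℤ^d)` and its translations -/

/-- The Hilbert space `ℓ²(ℤ^d)`. -/
abbrev Ltwo (d : ℕ) := lp (fun _ : Fin d → ℤ => ℂ) 2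

lemma Ltwo.hasSum_norm_sq {d : ℕ} (F : Ltwo d) : HasSum (fun m => ‖F m‖ ^ 2) (‖F‖ ^ 2) := by
  have := lp.hasSum_norm (p := 2) (by norm_num) F
  simpa using this

lemma Ltwo.tsum_sq {d : ℕ} (F : Ltwo d) :
    ∑' m, (‖F m‖₊ : ℝ≥0∞) ^ 2 = ENNReal.ofReal (‖F‖ ^ 2) := by
  rw [← (Ltwo.hasSum_norm_sq F).tsum_eq,
    ENNReal.ofReal_tsum_of_nonneg (fun _ => sq_nonneg _) (Ltwo.hasSum_norm_sq F).summable]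
  refine tsum_congr fun m => ?_
  rw [ENNReal.ofReal_pow (norm_nonneg _), ofReal_norm, enorm_eq_nnnorm]

lemma w2_zero {d : ℕ} (f : (Fin d → ℤ) → ℂ) :
    w2 0 f = (∑' m, (‖f m‖₊ : ℝ≥0∞) ^ 2) ^ (1 / 2 : ℝ) := by
  simp [w2, lpn]

lemma memLp_of_w2 {d : ℕ} {f : (Fin d → ℤ) → ℂ} (h : w2 0 f < ⊤) : Memℓp f 2 := by
  rw [w2_zero] at h
  have h' : ∑' m, (‖f m‖₊ : ℝ≥0∞) ^ 2 ≠ ⊤ := by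
    intro hh
    rw [hh, ENNReal.top_rpow_of_pos (by norm_num)] at h
    exact lt_irrefl _ h
  rw [memℓp_gen_iff (by norm_num)]
  have h2 : ∑' m, ((‖f m‖₊ ^ 2 : ℝ≥0) : ℝ≥0∞) ≠ ⊤ := by simpa using h'
  have h3 := NNReal.summable_coe.2 (ENNReal.tsum_coe_ne_top_iff_summable.1 h2)
  simpa using h3

lemma w2_coe {d : ℕ} (F : Ltwo d) : w2 0 (fun m => F m) = ‖F‖ₑ := by
  rw [w2_zero, Ltwo.tsum_sq F, ENNReal.ofReal_pow (norm_nonneg _), ofReal_norm,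
    ← ENNReal.rpow_natCast, ← ENNReal.rpow_mul]
  norm_num

lemma memLp_sub {d : ℕ} (n : Fin d → ℤ) (F : Ltwo d) :
    Memℓp (fun m => F (m - n)) 2 := by
  refine memℓp_gen ?_
  have := (Equiv.subRight n).summable_iff.2 ((lp.memℓp F).summable (by norm_num))
  simpa [Function.comp_def] using this

/-- Translation by `n` as a linear map on `ℓ²(ℤ^d)`. -/
def shiftLin {d : ℕ} (n : Fin d → ℤ) : Ltwo d →ₗ[ℂ] Ltwo d where
  toFun F := ⟨fun m => F (m - n), memLp_sub n F⟩
  map_add' _ _ := rfl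
  map_smul' _ _ := rfl

lemma norm_shiftLin {d : ℕ} (n : Fin d → ℤ) (F : Ltwo d) : ‖shiftLin n F‖ = ‖F‖ := by
  rw [← sq_eq_sq₀ (norm_nonneg _) (norm_nonneg _)]
  have h1 := Ltwo.hasSum_norm_sq (shiftLin n F)
  have h2 : HasSum (fun m => ‖F (m - n)‖ ^ 2) (‖F‖ ^ 2) :=
    (Equiv.subRight n).hasSum_iff.2 (Ltwo.hasSum_norm_sq F)
  exact h1.unique h2

/-- Translation by `n` as an isometry of `ℓ²(ℤ^d)`: `(shift n F)(m) = F(m - n)`. -/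
def shift {d : ℕ} (n : Fin d → ℤ) : Ltwo d →ₗᵢ[ℂ] Ltwo d :=
  ⟨shiftLin n, norm_shiftLin n⟩

lemma shift_apply {d : ℕ} (n : Fin d → ℤ) (F : Ltwo d) (m : Fin d → ℤ) :
    shift n F m = F (m - n) := rfl

lemma shift_shift {d : ℕ} (n k : Fin d → ℤ) (F : Ltwo d) :
    shift n (shift k F) = shift (n + k) F := by
  ext m
  simp only [shift_apply, sub_sub]

lemma shift_zero {d : ℕ} (F : Ltwo d) : shift 0 F = F := by
  ext m
  simp [shift_apply]

/-! ### The operators `∂ⱼ` on `ℓ²` -/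

lemma phi_single {d : ℕ} (j : Fin d) (a : ℤ) :
    phi d j (Pi.single j a) = -Complex.I * (psi a : ℂ) := by
  rw [phi, if_pos (fun i hi => by simp [hi]), psi, Pi.single_eq_same]
  push_cast
  ring

lemma phi_eq_zero_s7 {d : ℕ} (j : Fin d) (m : Fin d → ℤ)
    (hm : m ∉ Set.range (fun a : ℤ => (Pi.single j a : Fin d → ℤ))) : phi d j m = 0 := by
  rw [phi, if_neg]
  intro h
  refine hm ⟨m j, ?_⟩
  funext i
  rcases eq_or_ne i j with rfl | hi
  · simp
  · simp [hi, h i hi]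

/-- The convolution defining `∂ⱼ` runs along the `j`-th axis only. -/
lemma pd_eq_tsum {d : ℕ} (j : Fin d) (f : (Fin d → ℤ) → ℂ) (k : Fin d → ℤ) :
    pd j f k = ∑' a : ℤ, -Complex.I * ((psi a : ℂ) * f (k - Pi.single j a)) := by
  rw [pd, dconv, ← (Equiv.subLeft k).tsum_eq]
  simp only [Equiv.subLeft_apply, sub_sub_cancel]
  rw [← Function.Injective.tsum_eq (g := fun a : ℤ => (Pi.single j a : Fin d → ℤ))
    (Pi.single_injective (M := fun _ => ℤ) j)]
  · refine tsum_congr fun a => ?_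
    rw [phi_single]
    ring
  · intro m hm
    by_contra h
    exact hm (by simp [phi_eq_zero_s7 j m h])

/-- On `ℓ²`, `∂ⱼ` and the forward difference in direction `j` have the same norm. -/
lemma tsum_pd_sq {d : ℕ} (j : Fin d) (F : Ltwo d) :
    ∑' m, (‖pd j F m‖₊ : ℝ≥0∞) ^ 2 =
      ENNReal.ofReal (‖F - shift (Pi.single j 1) F‖ ^ 2) := by
  set w : ℤ → Ltwo d := fun a => shift (Pi.single j a) F with hw
  have hsum : Summable (fun a => (psi a : ℂ) • w a) := by
    refine Summable.of_norm_bounded (summable_psi.abs.mul_right ‖F‖) fun a => ?_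
    rw [norm_smul, hw, LinearIsometry.norm_map, Complex.norm_real, Real.norm_eq_abs]
  obtain ⟨x, hx⟩ := hsum
  have hgram : ∀ a b, inner ℂ (w a) (w b) = inner ℂ (w 0) (w (b - a)) := by
    intro a b
    have : w b = shift (Pi.single j a) (w (b - a)) := by
      simp only [hw]
      rw [shift_shift, ← Pi.single_add, add_sub_cancel]
    rw [this]
    simp only [hw]
    rw [LinearIsometry.inner_map_map, Pi.single_zero, shift_zero]
  have hnorm := inner_self_psi_sum w hgram x hx
  rw [inner_self_eq_norm_sq_to_K, inner_self_eq_norm_sq_to_K] at hnorm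
  have hnorm' : ‖x‖ ^ 2 = ‖w 0 - w 1‖ ^ 2 := by exact_mod_cast hnorm
  have hpd : ∀ m, pd j F m = -Complex.I * x m := by
    intro m
    have h := (hx.mapL (lp.evalCLM ℂ (fun _ : Fin d → ℤ => ℂ) 2 m)).mul_left (-Complex.I)
    rw [pd_eq_tsum]
    exact h.tsum_eq
  have h0 : w 0 = F := by simp only [hw]; rw [Pi.single_zero, shift_zero]
  rw [h0] at hnorm'
  rw [← hnorm', ← Ltwo.tsum_sq x]
  refine tsum_congr fun m => ?_
  rw [hpd m, nnnorm_mul]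
  simp

/-! ### Conservation of energy -/

/-- The discrete Laplacian on `ℓ²`. -/
def lapTwo {d : ℕ} (F : Ltwo d) : Ltwo d :=
  ∑ j, (shift (-Pi.single j 1) F + shift (Pi.single j 1) F - (2 : ℂ) • F)

lemma lapTwo_apply {d : ℕ} (F : Ltwo d) (m : Fin d → ℤ) : lapTwo F m = lap F m := by
  rw [lapTwo, lap, lp.coeFn_sum, Finset.sum_apply]
  refine Finset.sum_congr rfl fun j _ => ?_
  change F (m - -Pi.single j 1) + F (m - Pi.single j 1) - 2 * F m = _
  rw [sub_neg_eq_add]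

lemma inner_shift_left {d : ℕ} (n : Fin d → ℤ) (F G : Ltwo d) :
    inner ℂ (shift n F) G = inner ℂ F (shift (-n) G) := by
  rw [← LinearIsometry.inner_map_map (shift n) F, shift_shift, add_neg_cancel, shift_zero]

/-- Summation by parts: minus the Laplacian is the sum of `Dⱼ* Dⱼ`, with `Dⱼ` the difference
operator in direction `j`. -/
lemma sum_inner_diff {d : ℕ} (F G : Ltwo d) :
    ∑ j, inner ℂ (F - shift (Pi.single j 1) F) (G - shift (Pi.single j 1) G) =
      -inner ℂ F (lapTwo G) := by
  rw [lapTwo, inner_sum, ← Finset.sum_neg_distrib]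
  refine Finset.sum_congr rfl fun j _ => ?_
  simp only [inner_sub_left, inner_sub_right, inner_add_right, LinearIsometry.inner_map_map,
    inner_shift_left, inner_smul_right]
  ring

lemma inner_lapTwo_comm {d : ℕ} (F G : Ltwo d) :
    inner ℂ F (lapTwo G) = inner ℂ (lapTwo F) G := by
  rw [← inner_conj_symm (lapTwo F) G, ← neg_inj, ← sum_inner_diff, ← map_neg, ← sum_inner_diff,
    map_sum]
  simp_rw [inner_conj_symm]

/-- A curve of functions on `ℤ^d` read as a curve in `ℓ²`, with the value `0` at times where the
function is not square summable. -/
def toLtwo {d : ℕ} (f : ℝ → (Fin d → ℤ) → ℂ) (t : ℝ) : Ltwo d :=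
  open scoped Classical in if h : Memℓp (f t) 2 then ⟨f t, h⟩ else 0

lemma toLtwo_coe {d : ℕ} {f : ℝ → (Fin d → ℤ) → ℂ} {t : ℝ} (h : w2 0 (f t) < ⊤) :
    (toLtwo f t : (Fin d → ℤ) → ℂ) = f t := by
  rw [toLtwo, dif_pos (memLp_of_w2 h)]

lemma hasDerivWithinAt_toLtwo {d : ℕ} {S : Set ℝ} {f f' : ℝ → (Fin d → ℤ) → ℂ}
    (hf : ∀ t ∈ S, w2 0 (f t) < ⊤) (hf' : ∀ t ∈ S, w2 0 (f' t) < ⊤)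
    (h : DerivW 0 S f f') {t : ℝ} (ht : t ∈ S) :
    HasDerivWithinAt (toLtwo f) (toLtwo f' t) S t := by
  rw [hasDerivWithinAt_iff_tendsto_slope, tendsto_iff_edist_tendsto_0]
  refine (h t ht).congr' ?_
  filter_upwards [self_mem_nhdsWithin] with s hs
  rw [edist_eq_enorm_sub, ← w2_coe]
  congr 1
  funext m
  rw [slope_def_module]
  simp only [lp.coeFn_sub, lp.coeFn_smul, Pi.sub_apply, Pi.smul_apply, toLtwo_coe (hf s hs.1),
    toLtwo_coe (hf t ht), toLtwo_coe (hf' t ht)]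

/-- energy conservation for the discrete linear wave equation:
`E(t) = (1/2)Σ_k(|∂ₜu(k,t)|² + Σⱼ|∂ⱼu(k,t)|²)` is constant on `[0,T]`. -/
theorem stmt7 (d : ℕ) (hd : 0 < d) (T : ℝ) (hT : 0 < T)
    (u u1 u2 : ℝ → (Fin d → ℤ) → ℂ)
    (hu : IsC2 0 (Set.Icc 0 T) u u1 u2)
    (heq : ∀ t ∈ Set.Icc (0 : ℝ) T, ∀ x, u2 t x - lap (u t) x = 0) :
    ∀ t ∈ Set.Icc (0 : ℝ) T,
      (1 / 2 : ℝ≥0∞) *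
          ∑' m, ((‖u1 t m‖₊ : ℝ≥0∞) ^ 2 + ∑ j, (‖pd j (u t) m‖₊ : ℝ≥0∞) ^ 2) =
        (1 / 2 : ℝ≥0∞) *
          ∑' m, ((‖u1 0 m‖₊ : ℝ≥0∞) ^ 2 + ∑ j, (‖pd j (u 0) m‖₊ : ℝ≥0∞) ^ 2) := by
  have key : ∀ t ∈ Set.Icc (0 : ℝ) T,
      ∑' m, ((‖u1 t m‖₊ : ℝ≥0∞) ^ 2 + ∑ j, (‖pd j (u t) m‖₊ : ℝ≥0∞) ^ 2) =
        ENNReal.ofReal (‖toLtwo u1 t‖ ^ 2 +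
          ∑ j, ‖toLtwo u t - shift (Pi.single j 1) (toLtwo u t)‖ ^ 2) := by
    intro t ht
    rw [ENNReal.tsum_add, Summable.tsum_finsetSum (fun _ _ => ENNReal.summable),
      ENNReal.ofReal_add (by positivity) (by positivity),
      ENNReal.ofReal_sum_of_nonneg (fun _ _ => by positivity), ← Ltwo.tsum_sq,
      toLtwo_coe (hu.mem1 t ht)]
    congr 1
    refine Finset.sum_congr rfl fun j _ => ?_
    rw [← tsum_pd_sq, toLtwo_coe (hu.mem0 t ht)]
  -- Twice the energy, written with complex inner products so that the product rule applies.
  set E : ℝ → ℂ := fun t => inner ℂ (toLtwo u1 t) (toLtwo u1 t) +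
    ∑ j, inner ℂ (toLtwo u t - shift (Pi.single j 1) (toLtwo u t))
      (toLtwo u t - shift (Pi.single j 1) (toLtwo u t)) with hE
  have hder : ∀ t ∈ Set.Icc (0 : ℝ) T, HasDerivWithinAt E 0 (Set.Icc 0 T) t := by
    intro t ht
    have d0 := hasDerivWithinAt_toLtwo hu.mem0 hu.mem1 hu.hder1 ht
    have d1 := hasDerivWithinAt_toLtwo hu.mem1 hu.mem2 hu.hder2 ht
    have hwave : toLtwo u2 t = lapTwo (toLtwo u t) := by
      ext m
      rw [lapTwo_apply, toLtwo_coe (hu.mem2 t ht), toLtwo_coe (hu.mem0 t ht)]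
      exact sub_eq_zero.1 (heq t ht m)
    have dj : ∀ j : Fin d, HasDerivWithinAt
        (fun t => toLtwo u t - shift (Pi.single j 1) (toLtwo u t))
        (toLtwo u1 t - shift (Pi.single j 1) (toLtwo u1 t)) (Set.Icc 0 T) t := fun j =>
      d0.sub ((((shift (Pi.single j 1)).toContinuousLinearMap.restrictScalars
        ℝ).hasFDerivAt).comp_hasDerivWithinAt t d0)
    have hd := (d1.inner ℂ d1).add
      (HasDerivWithinAt.fun_sum (u := Finset.univ) fun j _ => (dj j).inner ℂ (dj j))
    convert! hd using 1
    rw [Finset.sum_add_distrib, sum_inner_diff, sum_inner_diff, hwave,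
      inner_lapTwo_comm (toLtwo u t)]
    ring
  have hconst : ∀ t ∈ Set.Icc (0 : ℝ) T, E t = E 0 :=
    constant_of_derivWithin_zero (fun t ht => (hder t ht).differentiableWithinAt)
      fun t ht => (hder t (Set.Ico_subset_Icc_self ht)).derivWithin
        (uniqueDiffOn_Icc hT t (Set.Ico_subset_Icc_self ht))
  intro t ht
  rw [key t ht, key 0 ⟨le_rfl, hT.le⟩]
  congr 2
  have h := hconst t ht
  simp only [hE, inner_self_eq_norm_sq_to_K] at h
  exact_mod_cast h
end
end
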